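/- arXiv:2401.01135 — 2 statements merged into one kernel-verified Lean document; each statement's English description precedes it below -/
import Mathlib

section
/- Let e ≥ 2 be even and let f : F_q → F_p belong to the class RF with sign ε. If ε(η_0(−1))^{e/2} = 1, then the code C_f' generated by the rows of [I_{e+2} | G_2] has length p^e + e + 2, dimension e + 2, and minimum distance p^e − p^{e−1} − (p−1)p^{e/2−1} + 2. If ε(η_0(−1))^{e/2} = −1, then C_f' has length p^e + e + 2, dimension e + 2, and minimum distance p^e − p^{e−1} − p^{e/2−1} + 1. In both cases, the dual (C_f')^⊥ has length p^e + e + 2, dimension p^e, and minimum distance 3. -/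
open scoped Classical

noncomputable section

/-- The complex primitive `p`-th root of unity `ζ_p = exp(2πi/p)`. -/
def zetapc (p : ℕ) : ℂ := Complex.exp (2 * Real.pi * Complex.I / p)

/-- `√p* = i^{((p-1)/2)²} √p`, a square root of `p* = (-1)^{(p-1)/2} p`. -/
def sqrtpstar (p : ℕ) : ℂ := Complex.I ^ (((p - 1) / 2) ^ 2) * (Real.sqrt p : ℂ)

/-- The quadratic character of a finite field: `1` on nonzero squares, `-1` on
nonsquares, `0` at `0`. -/
def qchar (F : Type*) [MonoidWithZero F] : F → ℤ :=
  fun y => if y = 0 then 0 else if IsSquare y then 1 else -1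

/-- `f : F_q → F_p` belongs to the class `RF` of weakly regular bent functions,
with sign `ε` and dual `fstar`. -/
structure IsRF (p e : ℕ) (Fq : Type*) [Field Fq] [Fintype Fq] [Algebra (ZMod p) Fq]
    (f : Fq → ZMod p) (ε : ℤ) (fstar : Fq → ZMod p) : Prop where
  sign : ε = 1 ∨ ε = -1
  map_zero : f 0 = 0
  hom : ∃ h : ℕ, Even h ∧ 0 < h ∧ Nat.gcd (h - 1) (p - 1) = 1 ∧
    ∀ a : ZMod p, a ≠ 0 → ∀ x : Fq,
      f (algebraMap (ZMod p) Fq a * x) = a ^ h * f x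
  walsh : ∀ β : Fq,
    (∑ x : Fq, zetapc p ^ (f x - Algebra.trace (ZMod p) Fq (β * x)).val)
      = (ε : ℂ) * sqrtpstar p ^ e * zetapc p ^ (fstar β).val

/-- The dual code under the standard inner product. -/
def dualCode {ι F : Type*} [Fintype ι] [CommRing F] (C : Set (ι → F)) : Set (ι → F) :=
  {u | ∀ v ∈ C, ∑ i, u i * v i = 0}

/-- `d` is the minimum distance of the code `C`: the smallest Hamming weight of a
nonzero codeword. -/
def IsMinDist {ι F : Type*} [Fintype ι] [CommRing F] (C : Set (ι → F)) (d : ℕ) : Prop :=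
  (∃ c ∈ C, c ≠ 0 ∧ hammingNorm c = d) ∧ ∀ c ∈ C, c ≠ 0 → d ≤ hammingNorm c

/-- The code generated by the rows of the block matrix `[I_k | G]`. -/
def genCode {ι F : Type*} [Fintype ι] [CommRing F] (k : ℕ) (G : Fin k → ι → F) :
    Set ((Fin k ⊕ ι) → F) :=
  {w | ∃ v : Fin k → F, w = Sum.elim v fun d => ∑ j, v j * G j d}


theorem aux_coeff (p : ℕ) [Fact p.Prime] (c : ZMod p → ℤ)
    (h : ∑ j, (c j : ℂ) * zetapc p ^ j.val = 0) (i j : ZMod p) : c i = c j := by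
  have hp : p.Prime := Fact.out
  have hz : IsPrimitiveRoot (zetapc p) p := Complex.isPrimitiveRoot_exp p hp.ne_zero
  let P : Polynomial ℚ := ∑ j : ZMod p, Polynomial.C (c j : ℚ) * Polynomial.X ^ j.val
  have hP : Polynomial.aeval (zetapc p) P = 0 := by
    simp only [P, map_sum, map_mul, Polynomial.aeval_C, map_pow, Polynomial.aeval_X]
    rw [← h]
    refine Finset.sum_congr rfl fun j _ => by simp
  have hmin : Polynomial.cyclotomic p ℚ ∣ P := by
    rw [Polynomial.cyclotomic_eq_minpoly_rat hz hp.pos]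
    exact minpoly.dvd ℚ _ hP
  have hco : ∀ k : ZMod p, P.coeff k.val = c k := by
    intro k
    simp only [P, Polynomial.finsetSum_coeff, Polynomial.coeff_C_mul, Polynomial.coeff_X_pow]
    rw [Finset.sum_eq_single k]
    · simp
    · intro b _ hb
      rw [if_neg, mul_zero]
      exact fun h => hb (ZMod.val_injective p h.symm)
    · simp
  obtain ⟨Q, hQ⟩ := hmin
  have hdeg : P.natDegree < p := by
    refine lt_of_le_of_lt (Polynomial.natDegree_sum_le_of_forall_le (n := p - 1) _ _ ?_)
      (Nat.sub_lt hp.pos one_pos)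
    intro k _
    refine (Polynomial.natDegree_C_mul_X_pow_le _ _).trans ?_
    have := ZMod.val_lt k
    omega
  have hQd : Q.natDegree = 0 := by
    by_cases hQ0 : Q = 0
    · simp [hQ0]
    rw [hQ, Polynomial.natDegree_mul (Polynomial.cyclotomic_ne_zero p ℚ) hQ0,
      Polynomial.natDegree_cyclotomic, Nat.totient_prime hp] at hdeg
    omega
  have key : ∀ k : ZMod p, (c k : ℚ) = Q.coeff 0 := by
    intro k
    rw [← hco k, hQ, Polynomial.eq_C_of_natDegree_eq_zero hQd, Polynomial.coeff_mul_C,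
      Polynomial.cyclotomic_prime, Polynomial.finsetSum_coeff]
    simp [Polynomial.coeff_X_pow, ZMod.val_lt k]
  have := (key i).trans (key j).symm
  exact_mod_cast this

theorem aux_sqrt (p n : ℕ) [Fact p.Prime] (hodd : Odd p) :
    sqrtpstar p ^ (2 * (n + 1)) = ((qchar (ZMod p) (-1) ^ (n + 1) * (p : ℤ) ^ (n + 1) : ℤ) : ℂ) := by
  have hp : p.Prime := Fact.out
  have h1 : sqrtpstar p ^ 2 = ((qchar (ZMod p) (-1) * (p : ℤ) : ℤ) : ℂ) := by
    unfold sqrtpstar qchar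
    rw [mul_pow, ← Complex.ofReal_pow, Real.sq_sqrt (by positivity), ← pow_mul, mul_comm _ 2,
      pow_mul, Complex.I_sq, if_neg (by simp), ZMod.exists_sq_eq_neg_one_iff]
    obtain ⟨k, hk⟩ := hodd
    have : (p - 1) / 2 = k := by omega
    rw [this]
    split_ifs with h
    · have : Even (k ^ 2) := by
        rw [Nat.even_pow' (by norm_num)]; rw [Nat.even_iff]; omega
      rw [this.neg_one_pow]; simp
    · have : Odd (k ^ 2) := by
        apply Odd.pow; rw [Nat.odd_iff]; omega
      rw [this.neg_one_pow]; simp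
  rw [pow_mul, h1, ← mul_pow]; push_cast; ring

theorem aux_count (p n : ℕ) [Fact p.Prime] (hodd : Odd p)
    (Fq : Type) [Field Fq] [Fintype Fq] [Algebra (ZMod p) Fq]
    (hcq : Fintype.card Fq = p ^ (2 * (n + 1)))
    (f : Fq → ZMod p) (ε : ℤ) (fstar : Fq → ZMod p) (hRF : IsRF p (2 * (n + 1)) Fq f ε fstar)
    (γ : Fq) (j : ZMod p) :
    (({x : Fq | f x - Algebra.trace (ZMod p) Fq (γ * x) = j} : Finset Fq).card : ℤ)
      = p * (p ^ n) ^ 2 - ε * qchar (ZMod p) (-1) ^ (n + 1) * p ^ n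
        + if j = fstar γ then ε * qchar (ZMod p) (-1) ^ (n + 1) * p ^ (n + 1) else 0 := by
  have hp : p.Prime := Fact.out
  set s := ε * qchar (ZMod p) (-1) ^ (n + 1) with hs
  let N : ZMod p → ℤ := fun j =>
    (({x : Fq | f x - Algebra.trace (ZMod p) Fq (γ * x) = j} : Finset Fq).card : ℤ)
  let c : ZMod p → ℤ := fun j => N j - if j = fstar γ then s * p ^ (n + 1) else 0
  have hc : ∑ j, (c j : ℂ) * zetapc p ^ j.val = 0 := by
    have hw := hRF.walsh γ
    rw [aux_sqrt p n hodd] at hw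
    have h2 : ∑ j, (N j : ℂ) * zetapc p ^ j.val =
        ∑ x : Fq, zetapc p ^ (f x - Algebra.trace (ZMod p) Fq (γ * x)).val := by
      rw [← Finset.sum_fiberwise (s := Finset.univ)
        (g := fun x => f x - Algebra.trace (ZMod p) Fq (γ * x))]
      refine Finset.sum_congr rfl fun j _ => ?_
      rw [Finset.sum_congr rfl (g := fun _ => zetapc p ^ j.val)]
      · simp [N]
      · intro x hx
        rw [(Finset.mem_filter.1 hx).2]
    have h3 : ∑ j, ((if j = fstar γ then s * p ^ (n + 1) else 0 : ℤ) : ℂ) * zetapc p ^ j.val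
        = ((s * p ^ (n + 1) : ℤ) : ℂ) * zetapc p ^ (fstar γ).val := by
      rw [Finset.sum_eq_single (fstar γ)]
      · rw [if_pos rfl]
      · intro b _ hb; rw [if_neg hb]; simp
      · simp
    simp only [c, Int.cast_sub, sub_mul, Finset.sum_sub_distrib]
    rw [h2, h3, hw, hs]; push_cast; ring
  have hall := aux_coeff p c hc
  have hsumN : ∑ j, N j = (p : ℤ) ^ (2 * (n + 1)) := by
    have := Finset.card_eq_sum_card_fiberwise (s := (Finset.univ : Finset Fq))
      (t := (Finset.univ : Finset (ZMod p)))
      (f := fun x => f x - Algebra.trace (ZMod p) Fq (γ * x)) (by simp)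
    rw [Finset.card_univ, hcq] at this
    simp only [N]
    exact_mod_cast this.symm
  have hsumc : ∑ j, c j = (p : ℤ) ^ (2 * (n + 1)) - s * p ^ (n + 1) := by
    simp only [c, Finset.sum_sub_distrib]
    rw [hsumN]; simp
  have hpc : (p : ℤ) * c j = (p : ℤ) ^ (2 * (n + 1)) - s * p ^ (n + 1) := by
    rw [← hsumc, Finset.sum_congr rfl (fun i _ => hall i j)]
    simp [ZMod.card]
  have hp0 : (p : ℤ) ≠ 0 := by exact_mod_cast hp.ne_zero
  have : c j = p * (p ^ n) ^ 2 - s * p ^ n := by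
    apply mul_left_cancel₀ hp0
    rw [hpc]; ring
  rw [← this]; simp only [c, N]; ring

theorem aux_fstar (p n : ℕ) [Fact p.Prime] (hodd : Odd p)
    (Fq : Type) [Field Fq] [Fintype Fq] [Algebra (ZMod p) Fq]
    (hcq : Fintype.card Fq = p ^ (2 * (n + 1)))
    (f : Fq → ZMod p) (ε : ℤ) (fstar : Fq → ZMod p) (hRF : IsRF p (2 * (n + 1)) Fq f ε fstar)
    (hs : ε * qchar (ZMod p) (-1) ^ (n + 1) = 1 ∨ ε * qchar (ZMod p) (-1) ^ (n + 1) = -1) :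
    fstar 0 = 0 := by
  have hp : p.Prime := Fact.out
  have hp2 : (2 : Fq) ≠ 0 := by
    have : ((2 : ℕ) : ZMod p) ≠ 0 := by
      rw [Ne, ZMod.natCast_eq_zero_iff]
      intro h
      rw [Nat.prime_dvd_prime_iff_eq hp Nat.prime_two] at h
      subst h; revert hodd; decide
    intro h
    apply this
    apply (algebraMap (ZMod p) Fq).injective
    rw [map_natCast, map_zero]; exact_mod_cast h
  by_contra hne
  have h1 := aux_count p n hodd Fq hcq f ε fstar hRF 0 (fstar 0)
  simp only [zero_mul, map_zero, sub_zero, if_true] at h1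
  have hev : ∀ x, f (-x) = f x := by
    obtain ⟨h, hh, -, -, H⟩ := hRF.hom
    intro x
    have := H (-1) (by simp) x
    rw [hh.neg_one_pow] at this
    simpa using this
  have heven : Even ({x : Fq | f x = fstar 0} : Finset Fq).card := by
    have := Finset.sum_involution (s := ({x : Fq | f x = fstar 0} : Finset Fq))
      (f := fun _ => (1 : ZMod 2)) (fun x _ => -x) (fun _ _ => by decide)
      (fun x hx _ h => by
        have h2 : 2 * x = 0 := by linear_combination -h
        have hx0 : x = 0 := by simpa [hp2] using h2
        subst hx0
        rw [Finset.mem_filter, hRF.map_zero] at hx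
        exact hne hx.2.symm)
      (fun x hx => by
        rw [Finset.mem_filter] at hx ⊢
        exact ⟨Finset.mem_univ _, by rw [hev]; exact hx.2⟩)
      (fun x _ => by simp)
    rw [Finset.sum_const, nsmul_one, ZMod.natCast_eq_zero_iff] at this
    exact even_iff_two_dvd.2 this
  have : Even ((({x : Fq | f x = fstar 0} : Finset Fq).card : ℤ)) := by exact_mod_cast heven
  rw [h1] at this
  have ho : Odd (p : ℤ) := by exact_mod_cast hodd
  have ho1 : Odd ((p : ℤ) ^ n) := ho.pow
  revert this
  rw [imp_false, Int.not_even_iff_odd]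
  have e1 : Odd ((p : ℤ) * (p ^ n) ^ 2) := ho.mul ho1.pow
  have e2 : Even ((p : ℤ) ^ n - p ^ (n + 1)) := ho1.sub_odd ho.pow
  rcases hs with hs | hs <;> rw [hs]
  · rw [show (p : ℤ) * (p ^ n) ^ 2 - 1 * p ^ n + 1 * p ^ (n + 1)
      = p * (p ^ n) ^ 2 - (p ^ n - p ^ (n + 1)) by ring]
    exact e1.sub_even e2
  · rw [show (p : ℤ) * (p ^ n) ^ 2 - -1 * p ^ n + -1 * p ^ (n + 1)
      = p * (p ^ n) ^ 2 + (p ^ n - p ^ (n + 1)) by ring]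
    exact e1.add_even e2

theorem aux_hamming {F ι κ : Type*} [CommRing F] [Fintype ι] [Fintype κ] (v : κ → F) (g : ι → F) :
    hammingNorm (Sum.elim v g) + ({d | g d = 0} : Finset ι).card
      = hammingNorm v + Fintype.card ι := by
  have h1 : hammingNorm (Sum.elim v g) = hammingNorm v + hammingNorm g := by
    unfold hammingNorm
    rw [Finset.card_filter, Finset.card_filter, Finset.card_filter, Fintype.sum_sum_type]
    rfl
  have h2 := Finset.card_filter_add_card_filter_not (s := (Finset.univ : Finset ι)) (fun d => g d = 0)
  rw [Finset.card_univ] at h2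
  rw [h1, ← h2]
  unfold hammingNorm
  simp only [ne_eq]
  omega

theorem aux_mem_dual {F ι : Type*} [CommRing F] [Fintype ι] (k : ℕ) (G : Fin k → ι → F)
    (u : Fin k ⊕ ι → F) :
    u ∈ dualCode (genCode k G) ↔ ∀ j, u (Sum.inl j) = - ∑ d, u (Sum.inr d) * G j d := by
  have hsum : ∀ v : Fin k → F, ∑ i, u i * (Sum.elim v (fun d => ∑ j, v j * G j d)) i
      = ∑ j, v j * (u (Sum.inl j) + ∑ d, u (Sum.inr d) * G j d) := by
    intro v
    simp only [Fintype.sum_sum_type, Sum.elim_inl, Sum.elim_inr, mul_add, Finset.sum_add_distrib,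
      Finset.mul_sum]
    rw [Finset.sum_comm]
    congr 1
    · exact Finset.sum_congr rfl fun _ _ => mul_comm _ _
    · exact Finset.sum_congr rfl fun _ _ => Finset.sum_congr rfl fun _ _ => by ring
  constructor
  · intro h j
    have := h _ ⟨Pi.single j 1, rfl⟩
    rw [hsum, Finset.sum_eq_single j] at this
    · rw [Pi.single_eq_same, one_mul] at this
      exact eq_neg_of_add_eq_zero_left this
    · intro b _ hb; simp [hb]
    · simp
  · rintro h _ ⟨v, rfl⟩
    rw [hsum]
    exact Finset.sum_eq_zero fun j _ => by rw [h j]; ring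

theorem aux_card_dual {F ι : Type} [CommRing F] [Fintype F] [Fintype ι] (k : ℕ) (G : Fin k → ι → F) :
    Nat.card (dualCode (genCode k G)) = Fintype.card F ^ Fintype.card ι := by
  have : (dualCode (genCode k G)) ≃ (ι → F) :=
    { toFun := fun u d => u.1 (Sum.inr d)
      invFun := fun w => ⟨Sum.elim (fun j => - ∑ d, w d * G j d) w, by
        rw [aux_mem_dual]; intro j; rfl⟩
      left_inv := by
        rintro ⟨u, hu⟩
        rw [aux_mem_dual] at hu
        ext i
        rcases i with j | d
        · simp [hu j]
        · rfl
      right_inv := fun w => rfl }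
  rw [Nat.card_congr this, Nat.card_eq_fintype_card, Fintype.card_fun]

theorem aux_card_gen {F ι : Type} [CommRing F] [Fintype F] [Fintype ι] (k : ℕ) (G : Fin k → ι → F) :
    Nat.card (genCode k G) = Fintype.card F ^ k := by
  have : (genCode k G) ≃ (Fin k → F) :=
    { toFun := fun u j => u.1 (Sum.inl j)
      invFun := fun v => ⟨_, v, rfl⟩
      left_inv := by
        rintro ⟨u, v, rfl⟩
        rfl
      right_inv := fun w => rfl }
  rw [Nat.card_congr this, Nat.card_eq_fintype_card, Fintype.card_fun, Fintype.card_fin]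

theorem aux_indep (p e : ℕ) [Fact p.Prime] (Fq : Type) [Field Fq] [Fintype Fq]
    [Algebra (ZMod p) Fq] (hcq : Fintype.card Fq = p ^ e)
    (β : Fq) (hβ : ∀ y : Fq, y ≠ 0 → ∃ k : ℕ, β ^ k = y) :
    LinearIndependent (ZMod p) (fun i : Fin e => β ^ (i : ℕ)) ∧
      Module.finrank (ZMod p) Fq = e := by
  have hp : p.Prime := Fact.out
  have hf : Module.finrank (ZMod p) Fq = e := by
    have := Module.card_eq_pow_finrank (K := ZMod p) (V := Fq)
    rw [hcq, ZMod.card] at this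
    exact (Nat.pow_right_injective hp.two_le this).symm
  refine ⟨?_, hf⟩
  have htop : IntermediateField.adjoin (ZMod p) {β} = ⊤ := by
    rw [eq_top_iff]
    intro y _
    by_cases hy : y = 0
    · rw [hy]; exact zero_mem _
    · obtain ⟨k, rfl⟩ := hβ y hy
      exact pow_mem (IntermediateField.mem_adjoin_simple_self _ _) k
  rw [Field.primitive_element_iff_minpoly_natDegree_eq, hf] at htop
  have := linearIndependent_pow (K := ZMod p) β
  rw [htop] at this
  exact this

theorem aux_tr_sep (p e : ℕ) [Fact p.Prime] (Fq : Type) [Field Fq] [Fintype Fq]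
    [Algebra (ZMod p) Fq] (hcq : Fintype.card Fq = p ^ e)
    (β : Fq) (hβ : ∀ y : Fq, y ≠ 0 → ∃ k : ℕ, β ^ k = y) (d : Fq)
    (hd : ∀ i : Fin e, Algebra.trace (ZMod p) Fq (β ^ (i : ℕ) * d) = 0) : d = 0 := by
  obtain ⟨hli, hf⟩ := aux_indep p e Fq hcq β hβ
  have hspan := hli.span_eq_top_of_card_eq_finrank' (by simp [hf])
  have htr := (traceForm_nondegenerate (ZMod p) Fq).1 d
  apply htr
  intro y
  rw [Algebra.traceForm_apply]
  have hy : y ∈ Submodule.span (ZMod p) (Set.range fun i : Fin e => β ^ (i : ℕ)) := by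
    rw [hspan]; trivial
  induction hy using Submodule.span_induction with
  | mem x h => obtain ⟨i, rfl⟩ := h; rw [mul_comm]; exact hd i
  | zero => simp
  | add x y _ _ hx hy => rw [mul_add, map_add, hx, hy, add_zero]
  | smul a x _ hx => rw [mul_smul_comm, map_smul, hx, smul_zero]

theorem aux_tr_fiber (p e : ℕ) [Fact p.Prime] (Fq : Type) [Field Fq] [Fintype Fq]
    [Algebra (ZMod p) Fq] (hcq : Fintype.card Fq = p ^ (e + 1)) (γ : Fq) (hγ : γ ≠ 0) (c : ZMod p) :
    ({d | Algebra.trace (ZMod p) Fq (γ * d) = c} : Finset Fq).card = p ^ e := by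
  have hp : p.Prime := Fact.out
  let φ : Fq →ₗ[ZMod p] ZMod p := (Algebra.trace (ZMod p) Fq).comp (LinearMap.mulLeft (ZMod p) γ)
  have hsurj : Function.Surjective φ := by
    rcases LinearMap.surjective_or_eq_zero φ with h | h
    · exact h
    · exfalso; apply hγ
      apply (traceForm_nondegenerate (ZMod p) Fq).1 γ
      intro y
      exact LinearMap.congr_fun h y
  have heq : ∀ c', ({d | φ d = c'} : Finset Fq).card = ({d | φ d = c} : Finset Fq).card := by
    intro c'
    exact AddMonoidHom.card_fiber_eq_of_mem_range φ.toAddMonoidHom (hsurj c') (hsurj c)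
  have := Finset.card_eq_sum_card_fiberwise (s := (Finset.univ : Finset Fq))
      (t := (Finset.univ : Finset (ZMod p))) (f := φ) (by simp)
  rw [Finset.card_univ, hcq, Finset.sum_congr rfl (fun c' _ => heq c')] at this
  simp only [Finset.sum_const, Finset.card_univ, ZMod.card, smul_eq_mul] at this
  apply Nat.eq_of_mul_eq_mul_left hp.pos
  rw [← pow_succ', this]
  rfl

def auxGamma {p e : ℕ} {Fq : Type} [Field Fq] [Algebra (ZMod p) Fq] (β : Fq)
    (v : Fin (e + 2) → ZMod p) : Fq := ∑ i : Fin e, v i.succ.succ • β ^ (i : ℕ)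

theorem aux_eval (p e : ℕ) [Fact p.Prime] (Fq : Type) [Field Fq] [Fintype Fq]
    [Algebra (ZMod p) Fq] (f : Fq → ZMod p) (β : Fq)
    (G2 : Fin (e + 2) → Fq → ZMod p)
    (hG2 : ∀ k d, G2 k d =
      if (k : ℕ) = 0 then 1
      else if (k : ℕ) = 1 then f d + 1
      else Algebra.trace (ZMod p) Fq (β ^ ((k : ℕ) - 2) * d)) (v : Fin (e + 2) → ZMod p) (d : Fq) :
    ∑ j, v j * G2 j d = v 0 + v 1 * (f d + 1) + Algebra.trace (ZMod p) Fq (auxGamma β v * d) := by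
  rw [Fin.sum_univ_succ, Fin.sum_univ_succ, auxGamma, Finset.sum_mul, map_sum, ← add_assoc]
  congr 1
  · simp [hG2]
  · refine Finset.sum_congr rfl fun i _ => ?_
    rw [smul_mul_assoc, map_smul, smul_eq_mul, hG2]
    simp

theorem aux_weights (p n : ℕ) [Fact p.Prime] (hodd : Odd p)
    (Fq : Type) [Field Fq] [Fintype Fq] [Algebra (ZMod p) Fq]
    (hcq : Fintype.card Fq = p ^ (2 * (n + 1)))
    (f : Fq → ZMod p) (ε : ℤ) (fstar : Fq → ZMod p) (hRF : IsRF p (2 * (n + 1)) Fq f ε fstar)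
    (β : Fq) (hβ : ∀ y : Fq, y ≠ 0 → ∃ k : ℕ, β ^ k = y)
    (v : Fin (2 * (n + 1) + 2) → ZMod p) (hv : v ≠ 0) (N : ℕ)
    (hN : N = ({d | v 0 + v 1 * (f d + 1) + Algebra.trace (ZMod p) Fq (auxGamma β v * d) = 0} :
      Finset Fq).card) :
    (v 1 = 0 ∧ N ≤ p * (p ^ n) ^ 2) ∨ (v 1 ≠ 0 ∧
      (N : ℤ) = p * (p ^ n) ^ 2 - ε * qchar (ZMod p) (-1) ^ (n + 1) * p ^ n
        + if -(v 0 + v 1) / v 1 = fstar (-((v 1)⁻¹ • auxGamma β v))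
          then ε * qchar (ZMod p) (-1) ^ (n + 1) * p ^ (n + 1) else 0) := by
  by_cases h1 : v 1 = 0
  · left
    refine ⟨h1, ?_⟩
    simp only [h1, zero_mul, add_zero] at hN
    by_cases hg : auxGamma β v = 0
    · have h0 : v 0 ≠ 0 := by
        intro h0
        apply hv
        have := Fintype.linearIndependent_iff.1 (aux_indep p _ Fq hcq β hβ).1
          (fun i => v i.succ.succ) hg
        funext i
        refine Fin.cases h0 (fun i => ?_) i
        refine Fin.cases h1 (fun i => ?_) i
        exact this i
      rw [hN, hg]
      simp [h0]
    · have := aux_tr_fiber p (2 * n + 1) Fq hcq (auxGamma β v) hg (- v 0)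
      rw [hN]
      apply le_of_eq
      rw [show p * (p ^ n) ^ 2 = p ^ (2 * n + 1) by ring, ← this]
      congr 1
      ext d
      simp only [Finset.mem_filter, Finset.mem_univ, true_and]
      constructor <;> intro h <;> linear_combination h
  · right
    refine ⟨h1, ?_⟩
    rw [← aux_count p n hodd Fq hcq f ε fstar hRF, hN]
    congr 2
    ext d
    simp only [Finset.mem_filter, Finset.mem_univ, true_and]
    rw [neg_mul, map_neg, smul_mul_assoc, map_smul, smul_eq_mul]
    generalize Algebra.trace (ZMod p) Fq (auxGamma β v * d) = T
    constructor
    · intro h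
      field_simp
      linear_combination h
    · intro h
      field_simp at h
      linear_combination h

theorem aux_one (p : ℕ) [Fact p.Prime]
    (Fq : Type) [Field Fq] [Fintype Fq] [Algebra (ZMod p) Fq] (β : Fq) (e : ℕ)
    (v : Fin (e + 2) → ZMod p) (h1 : v 1 ≠ 0) (hle : hammingNorm v ≤ 1) :
    v 0 = 0 ∧ auxGamma β v = 0 := by
  unfold hammingNorm at hle
  rw [Finset.card_le_one] at hle
  have key : ∀ i, i ≠ 1 → v i = 0 := by
    intro i hi
    by_contra h
    exact hi (hle i (by simp [h]) 1 (by simp [h1]))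
  refine ⟨key 0 (by simp [Fin.ext_iff]), ?_⟩
  refine Finset.sum_eq_zero fun i _ => ?_
  rw [key, zero_smul]
  simp [Fin.ext_iff]

theorem aux_norm_pos {F ι : Type*} [CommRing F] [Fintype ι] (v : ι → F) (hv : v ≠ 0) :
    1 ≤ hammingNorm v := hammingNorm_pos_iff.2 hv

theorem aux_dual_min (p e : ℕ) [Fact p.Prime]
    (Fq : Type) [Field Fq] [Fintype Fq] [Algebra (ZMod p) Fq]
    (hcq : Fintype.card Fq = p ^ e)
    (f : Fq → ZMod p) (hf0 : f 0 = 0)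
    (β : Fq) (hβ : ∀ y : Fq, y ≠ 0 → ∃ k : ℕ, β ^ k = y)
    (G2 : Fin (e + 2) → Fq → ZMod p)
    (hG2 : ∀ k d, G2 k d =
      if (k : ℕ) = 0 then 1
      else if (k : ℕ) = 1 then f d + 1
      else Algebra.trace (ZMod p) Fq (β ^ ((k : ℕ) - 2) * d)) :
    IsMinDist (dualCode (genCode (e + 2) G2)) 3 := by
  have h0 : ∀ d, G2 0 d = 1 := fun d => by simp [hG2]
  have h1 : ∀ d, G2 1 d = f d + 1 := fun d => by simp [hG2]
  have h2 : ∀ (i : Fin e) d, G2 i.succ.succ d = Algebra.trace (ZMod p) Fq (β ^ (i : ℕ) * d) :=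
    fun i d => by simp [hG2]
  constructor
  · refine ⟨Sum.elim (fun j => if j = 0 ∨ j = 1 then 1 else 0) (fun d => if d = 0 then -1 else 0),
      ?_, ?_, ?_⟩
    · rw [aux_mem_dual]
      intro j
      simp only [Sum.elim_inl, Sum.elim_inr, ite_mul, zero_mul, Finset.sum_ite_eq',
        Finset.mem_univ, if_true]
      refine Fin.cases ?_ (fun j => ?_) j
      · simp [h0]
      refine Fin.cases ?_ (fun j => ?_) j
      · have : (Fin.succ 0 : Fin (e + 2)) = 1 := rfl
        rw [this]; simp [h1, hf0]
      · rw [h2]; simp [Fin.ext_iff]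
    · intro h
      have := congrFun h (Sum.inl 0)
      simp at this
    · have e1 : hammingNorm (fun j : Fin (e + 2) => if j = 0 ∨ j = 1 then (1 : ZMod p) else 0)
          = 2 := by
        unfold hammingNorm
        rw [show ({i | (if i = 0 ∨ i = 1 then (1 : ZMod p) else 0) ≠ 0} : Finset (Fin (e + 2)))
          = {0, 1} by ext i; by_cases h0 : i = 0 <;> by_cases h1 : i = 1 <;> simp [h0, h1]]
        rw [Finset.card_pair (by simp [Fin.ext_iff])]
      have e2 : hammingNorm (fun d : Fq => if d = 0 then (-1 : ZMod p) else 0) = 1 := by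
        unfold hammingNorm
        rw [show ({i | (if i = 0 then (-1 : ZMod p) else 0) ≠ 0} : Finset Fq)
          = {0} by ext i; simp]
        rw [Finset.card_singleton]
      have h1 : ∀ (κ : Type) [Fintype κ] (v : κ → ZMod p) (g : Fq → ZMod p),
          hammingNorm (Sum.elim v g) = hammingNorm v + hammingNorm g := by
        intro κ _ v g
        unfold hammingNorm
        rw [Finset.card_filter, Finset.card_filter, Finset.card_filter, Fintype.sum_sum_type]
        rfl
      have e4 := h1 _ (fun j : Fin (e + 2) => if j = 0 ∨ j = 1 then (1 : ZMod p) else 0)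
        (fun d : Fq => if d = 0 then (-1 : ZMod p) else 0)
      rw [e1, e2] at e4
      convert e4
  · intro u hu hne
    by_contra hlt
    rw [aux_mem_dual] at hu
    have hle' : ({i | u i ≠ 0} : Finset (Fin (e + 2) ⊕ Fq)).card ≤ 2 := by
      unfold hammingNorm at hlt
      have hlt := Nat.le_of_lt_succ (Nat.lt_of_not_le hlt)
      convert hlt
    -- three distinct indices cannot all be in the support
    have key : ∀ i j k, i ≠ j → i ≠ k → j ≠ k → u i ≠ 0 → u j ≠ 0 → u k = 0 := by
      intro i j k hij hik hjk hi hj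
      by_contra hk
      have hsub : ({i, j, k} : Finset (Fin (e + 2) ⊕ Fq)) ⊆ ({i | u i ≠ 0} : Finset (Fin (e + 2) ⊕ Fq)) := by
        intro x hx
        simp only [Finset.mem_insert, Finset.mem_singleton] at hx
        simp only [Finset.mem_filter, Finset.mem_univ, true_and]
        rcases hx with rfl | rfl | rfl <;> assumption
      have := Finset.card_le_card hsub
      rw [Finset.card_eq_three.2 ⟨i, j, k, hij, hik, hjk, rfl⟩] at this
      omega
    -- some right coordinate is nonzero
    have hex : ∃ d, u (Sum.inr d) ≠ 0 := by
      by_contra hno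
      push Not at hno
      apply hne
      funext i
      rcases i with j | d
      · rw [hu j]; simp [hno]
      · exact hno d
    obtain ⟨d, hd⟩ := hex
    by_cases hex2 : ∃ d', d' ≠ d ∧ u (Sum.inr d') ≠ 0
    · obtain ⟨d', hdd, hd'⟩ := hex2
      have hother : ∀ x, x ≠ d ∧ x ≠ d' → u (Sum.inr x) = 0 := by
        rintro x ⟨hx, hx'⟩
        exact key (Sum.inr d) (Sum.inr d') _ (by simp [hdd.symm]) (by simp [hx.symm])
          (by simp [hx'.symm]) hd hd'
      have hs : ∀ j, u (Sum.inr d) * G2 j d + u (Sum.inr d') * G2 j d' = 0 := by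
        intro j
        have h3 : u (Sum.inl j) = 0 := key (Sum.inr d) (Sum.inr d') _ (by simp [hdd.symm])
          (by simp) (by simp) hd hd'
        have h4 := hu j
        rw [h3, Finset.sum_eq_add d d' hdd.symm (fun x _ hx => by rw [hother x hx, zero_mul])
          (by simp) (by simp)] at h4
        linear_combination h4
      have hs0 := hs 0
      rw [h0, h0] at hs0
      have hval : u (Sum.inr d') = - u (Sum.inr d) := by linear_combination hs0
      apply hdd
      have : d - d' = 0 := by
        apply aux_tr_sep p e Fq hcq β hβ
        intro i
        have := hs i.succ.succ
        rw [h2, h2, hval] at this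
        rw [mul_sub, map_sub]
        apply mul_left_cancel₀ hd
        linear_combination this
      linear_combination -this
    · push Not at hex2
      have hs : ∀ j, u (Sum.inl j) = - (u (Sum.inr d) * G2 j d) := by
        intro j
        rw [hu j, Finset.sum_eq_single d (fun x _ hx => by rw [hex2 x hx, zero_mul]) (by simp)]
      have h3 : u (Sum.inl 0) ≠ 0 := by rw [hs, h0]; simpa using hd
      have h4 : ∀ j, j ≠ 0 → G2 j d = 0 := by
        intro j hj
        have := key (Sum.inr d) (Sum.inl 0) (Sum.inl j) (by simp) (by simp) (by simp [hj.symm]) hd h3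
        rw [hs j] at this
        simpa [hd] using this
      have hd0 : d = 0 := by
        apply aux_tr_sep p e Fq hcq β hβ
        intro i
        rw [← h2]
        exact h4 _ (by simp [Fin.ext_iff])
      have := h4 1 (by simp [Fin.ext_iff])
      rw [h1, hd0, hf0] at this
      simp at this

theorem aux_word (p n : ℕ) [Fact p.Prime] (hodd : Odd p)
    (Fq : Type) [Field Fq] [Fintype Fq] [Algebra (ZMod p) Fq]
    (hcq : Fintype.card Fq = p ^ (2 * (n + 1)))
    (f : Fq → ZMod p) (ε : ℤ) (fstar : Fq → ZMod p) (hRF : IsRF p (2 * (n + 1)) Fq f ε fstar)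
    (β : Fq) (hβ : ∀ y : Fq, y ≠ 0 → ∃ k : ℕ, β ^ k = y)
    (G2 : Fin (2 * (n + 1) + 2) → Fq → ZMod p)
    (hG2 : ∀ k d, G2 k d =
      if (k : ℕ) = 0 then 1
      else if (k : ℕ) = 1 then f d + 1
      else Algebra.trace (ZMod p) Fq (β ^ ((k : ℕ) - 2) * d))
    (v : Fin (2 * (n + 1) + 2) → ZMod p) (hv : v ≠ 0) :
    ∃ N : ℕ, hammingNorm (Sum.elim v fun d => ∑ j, v j * G2 j d) + N
        = hammingNorm v + p ^ (2 * (n + 1)) ∧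
    ((v 1 = 0 ∧ N ≤ p * (p ^ n) ^ 2) ∨ (v 1 ≠ 0 ∧
      (N : ℤ) = p * (p ^ n) ^ 2 - ε * qchar (ZMod p) (-1) ^ (n + 1) * p ^ n
        + if -(v 0 + v 1) / v 1 = fstar (-((v 1)⁻¹ • auxGamma β v))
          then ε * qchar (ZMod p) (-1) ^ (n + 1) * p ^ (n + 1) else 0)) := by
  have hw := aux_hamming v (fun d => ∑ j, v j * G2 j d)
  rw [hcq] at hw
  simp only [aux_eval p _ Fq f β G2 hG2] at hw ⊢
  refine ⟨_, ?_, aux_weights p n hodd Fq hcq f ε fstar hRF β hβ v hv _ rfl⟩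
  convert hw

theorem aux_plus (p n : ℕ) [Fact p.Prime] (hodd : Odd p)
    (Fq : Type) [Field Fq] [Fintype Fq] [Algebra (ZMod p) Fq]
    (hcq : Fintype.card Fq = p ^ (2 * (n + 1)))
    (f : Fq → ZMod p) (ε : ℤ) (fstar : Fq → ZMod p) (hRF : IsRF p (2 * (n + 1)) Fq f ε fstar)
    (β : Fq) (hβ : ∀ y : Fq, y ≠ 0 → ∃ k : ℕ, β ^ k = y)
    (G2 : Fin (2 * (n + 1) + 2) → Fq → ZMod p)
    (hG2 : ∀ k d, G2 k d =
      if (k : ℕ) = 0 then 1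
      else if (k : ℕ) = 1 then f d + 1
      else Algebra.trace (ZMod p) Fq (β ^ ((k : ℕ) - 2) * d))
    (hs : ε * qchar (ZMod p) (-1) ^ (n + 1) = 1) :
    IsMinDist (genCode (2 * (n + 1) + 2) G2)
      (p ^ (2 * (n + 1)) - p ^ (2 * n + 1) - (p - 1) * p ^ n + 2) := by
  have hp : p.Prime := Fact.out
  have hf0 := aux_fstar p n hodd Fq hcq f ε fstar hRF (Or.inl hs)
  have hword := aux_word p n hodd Fq hcq f ε fstar hRF β hβ G2 hG2
  obtain ⟨r, hr⟩ : ∃ r, p = r + 2 := ⟨p - 2, by have := hp.two_le; omega⟩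
  have ht : 1 ≤ p ^ n := Nat.pos_of_ne_zero (pow_ne_zero _ hp.ne_zero)
  have e1 : p ^ (2 * (n + 1)) = p ^ 2 * (p ^ n) ^ 2 := by ring
  have e2 : p ^ (2 * n + 1) = p * (p ^ n) ^ 2 := by ring
  have e3 : p - 1 = r + 1 := by omega
  have hbig : p * (p ^ n) ^ 2 + (r + 1) * p ^ n ≤ p ^ 2 * (p ^ n) ^ 2 := by
    generalize p ^ n = t at *
    subst hr
    nlinarith [mul_le_mul ht ht (by norm_num) (by omega), Nat.zero_le (r * t ^ 2),
      Nat.zero_le (r ^ 2 * t ^ 2), mul_le_mul_left ht (r * t), mul_le_mul_left ht t,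
      mul_le_mul_right ht (r * t), mul_le_mul_right ht t]
  rw [e1, e2, e3]
  simp only [e1, hs] at hword
  constructor
  · let v : Fin (2 * (n + 1) + 2) → ZMod p := fun j => if j = 0 then -1 else if j = 1 then 1 else 0
    have hv0 : v 0 = -1 := by simp [v]
    have hv1 : v 1 = 1 := by simp [v]
    have hg : auxGamma β v = 0 := by
      refine Finset.sum_eq_zero fun i _ => ?_
      have h0 : i.succ.succ ≠ 0 := Fin.succ_ne_zero _
      have h1 : i.succ.succ ≠ 1 := fun h => by
        have := congrArg Fin.val h
        simp at this
      simp only [v, if_neg h0, if_neg h1, zero_smul]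
    have hv : v ≠ 0 := fun h => by
      have := congrFun h 1
      rw [hv1] at this; simp at this
    have hn : hammingNorm v = 2 := by
      unfold hammingNorm
      rw [show ({i | v i ≠ 0} : Finset (Fin (2 * (n + 1) + 2))) = {0, 1} by
        ext i; by_cases h0 : i = 0 <;> by_cases h1 : i = 1 <;> simp [v, h0, h1]]
      rw [Finset.card_pair (by simp [Fin.ext_iff])]
    refine ⟨_, ⟨v, rfl⟩, ?_, ?_⟩
    · intro h
      exact hv (funext fun i => congrFun h (Sum.inl i))
    · obtain ⟨N, hN, h | ⟨h, hN2⟩⟩ := hword v hv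
      · rw [hv1] at h; simp at h
      · rw [hg, hv0, hv1, if_pos (by simp [hf0])] at hN2
        have hN3 : N = p * (p ^ n) ^ 2 + (r + 1) * p ^ n := by
          zify; rw [hN2, pow_succ]
          have : (p : ℤ) = r + 2 := by exact_mod_cast hr
          linear_combination (p : ℤ) ^ n * this
        have hN' : hammingNorm (Sum.elim v fun d => ∑ j, v j * G2 j d) + N
            = 2 + p ^ 2 * (p ^ n) ^ 2 := by
          rw [hN]; congr 1
        have : hammingNorm (Sum.elim v fun d => ∑ j, v j * G2 j d)
          = p ^ 2 * (p ^ n) ^ 2 - p * (p ^ n) ^ 2 - (r + 1) * p ^ n + 2 := by omega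
        convert this
  · rintro _ ⟨v, rfl⟩ hne
    have hv : v ≠ 0 := by
      rintro rfl
      apply hne
      funext i
      rcases i with i | i <;> simp
    have hpos : 1 ≤ hammingNorm v := by
      convert aux_norm_pos v hv
    have hrt : 1 ≤ (r + 1) * p ^ n := Nat.mul_pos (by omega) ht
    have goal' : p ^ 2 * (p ^ n) ^ 2 - p * (p ^ n) ^ 2 - (r + 1) * p ^ n + 2 ≤
        hammingNorm (Sum.elim v fun d => ∑ j, v j * G2 j d) := by
      obtain ⟨N, hN, ⟨h, hN2⟩ | ⟨h, hN2⟩⟩ := hword v hv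
      · omega
      · by_cases hle : hammingNorm v ≤ 1
        · obtain ⟨g0, gg⟩ := aux_one p Fq β _ v h hle
          rw [if_neg] at hN2
          · have : N + p ^ n = p * (p ^ n) ^ 2 := by
              zify; rw [hN2]; ring
            omega
          · rw [gg, g0, zero_add, neg_div, div_self h, smul_zero, neg_zero, hf0]
            simp
        · have hN3 : N ≤ p * (p ^ n) ^ 2 + (r + 1) * p ^ n := by
            zify; rw [hN2, pow_succ]
            have : (p : ℤ) = r + 2 := by exact_mod_cast hr
            have ht' : (0 : ℤ) ≤ p ^ n := by positivity
            have hr' : (0 : ℤ) ≤ r * p ^ n := by positivity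
            split_ifs
            · apply le_of_eq; linear_combination (p : ℤ) ^ n * this
            · linarith
          omega
    convert goal'

theorem aux_minus (p n : ℕ) [Fact p.Prime] (hodd : Odd p)
    (Fq : Type) [Field Fq] [Fintype Fq] [Algebra (ZMod p) Fq]
    (hcq : Fintype.card Fq = p ^ (2 * (n + 1)))
    (f : Fq → ZMod p) (ε : ℤ) (fstar : Fq → ZMod p) (hRF : IsRF p (2 * (n + 1)) Fq f ε fstar)
    (β : Fq) (hβ : ∀ y : Fq, y ≠ 0 → ∃ k : ℕ, β ^ k = y)
    (G2 : Fin (2 * (n + 1) + 2) → Fq → ZMod p)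
    (hG2 : ∀ k d, G2 k d =
      if (k : ℕ) = 0 then 1
      else if (k : ℕ) = 1 then f d + 1
      else Algebra.trace (ZMod p) Fq (β ^ ((k : ℕ) - 2) * d))
    (hs : ε * qchar (ZMod p) (-1) ^ (n + 1) = -1) :
    IsMinDist (genCode (2 * (n + 1) + 2) G2)
      (p ^ (2 * (n + 1)) - p ^ (2 * n + 1) - p ^ n + 1) := by
  have hp : p.Prime := Fact.out
  have hf0 := aux_fstar p n hodd Fq hcq f ε fstar hRF (Or.inr hs)
  have hword := aux_word p n hodd Fq hcq f ε fstar hRF β hβ G2 hG2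
  obtain ⟨r, hr⟩ : ∃ r, p = r + 2 := ⟨p - 2, by have := hp.two_le; omega⟩
  have ht : 1 ≤ p ^ n := Nat.pos_of_ne_zero (pow_ne_zero _ hp.ne_zero)
  have e1 : p ^ (2 * (n + 1)) = p ^ 2 * (p ^ n) ^ 2 := by ring
  have e2 : p ^ (2 * n + 1) = p * (p ^ n) ^ 2 := by ring
  have hbig : p * (p ^ n) ^ 2 + p ^ n ≤ p ^ 2 * (p ^ n) ^ 2 := by
    generalize p ^ n = t at *
    subst hr
    nlinarith [mul_le_mul ht ht (by norm_num) (by omega), Nat.zero_le (r * t ^ 2),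
      Nat.zero_le (r ^ 2 * t ^ 2), mul_le_mul_left ht t, mul_le_mul_right ht t]
  rw [e1, e2]
  simp only [e1, hs] at hword
  constructor
  · let v : Fin (2 * (n + 1) + 2) → ZMod p := fun j => if j = 1 then 1 else 0
    have hv0 : v 0 = 0 := by simp [v]
    have hv1 : v 1 = 1 := by simp [v]
    have hg : auxGamma β v = 0 := by
      refine Finset.sum_eq_zero fun i _ => ?_
      have h1 : i.succ.succ ≠ 1 := fun h => by
        have := congrArg Fin.val h
        simp at this
      simp only [v, if_neg h1, zero_smul]
    have hv : v ≠ 0 := fun h => by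
      have := congrFun h 1
      rw [hv1] at this; simp at this
    have hn : hammingNorm v = 1 := by
      unfold hammingNorm
      rw [show ({i | v i ≠ 0} : Finset (Fin (2 * (n + 1) + 2))) = {1} by
        ext i; by_cases h1 : i = 1 <;> simp [v, h1]]
      rw [Finset.card_singleton]
    refine ⟨_, ⟨v, rfl⟩, ?_, ?_⟩
    · intro h
      exact hv (funext fun i => congrFun h (Sum.inl i))
    · obtain ⟨N, hN, h | ⟨h, hN2⟩⟩ := hword v hv
      · rw [hv1] at h; simp at h
      · rw [hg, hv0, hv1, if_neg (by simp [hf0])] at hN2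
        have hN3 : N = p * (p ^ n) ^ 2 + p ^ n := by
          zify; rw [hN2]; ring
        have hN' : hammingNorm (Sum.elim v fun d => ∑ j, v j * G2 j d) + N
            = 1 + p ^ 2 * (p ^ n) ^ 2 := by
          rw [hN]; congr 1
        have : hammingNorm (Sum.elim v fun d => ∑ j, v j * G2 j d)
          = p ^ 2 * (p ^ n) ^ 2 - p * (p ^ n) ^ 2 - p ^ n + 1 := by omega
        convert this
  · rintro _ ⟨v, rfl⟩ hne
    have hv : v ≠ 0 := by
      rintro rfl
      apply hne
      funext i
      rcases i with i | i <;> simp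
    have hpos : 1 ≤ hammingNorm v := by
      convert aux_norm_pos v hv
    have goal' : p ^ 2 * (p ^ n) ^ 2 - p * (p ^ n) ^ 2 - p ^ n + 1 ≤
        hammingNorm (Sum.elim v fun d => ∑ j, v j * G2 j d) := by
      obtain ⟨N, hN, ⟨h, hN2⟩ | ⟨h, hN2⟩⟩ := hword v hv
      · omega
      · have hN3 : N ≤ p * (p ^ n) ^ 2 + p ^ n := by
          zify; rw [hN2]
          have ht' : (0 : ℤ) ≤ p ^ (n + 1) := by positivity
          split_ifs <;> linarith
        omega
    convert goal'

theorem stmt17 (p e : ℕ) [Fact p.Prime] (hodd : Odd p) (he : 2 ≤ e) (heven : Even e)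
    (Fq : Type) [Field Fq] [Fintype Fq] [Algebra (ZMod p) Fq]
    (hcq : Fintype.card Fq = p ^ e)
    (f : Fq → ZMod p) (ε : ℤ) (fstar : Fq → ZMod p) (hRF : IsRF p e Fq f ε fstar)
    -- `β` is a primitive element of `F_q`
    (β : Fq) (hβ : ∀ y : Fq, y ≠ 0 → ∃ k : ℕ, β ^ k = y)
    -- the matrix `G₂`
    (G2 : Fin (e + 2) → Fq → ZMod p)
    (hG2 : ∀ k d, G2 k d =
      if (k : ℕ) = 0 then 1
      else if (k : ℕ) = 1 then f d + 1
      else Algebra.trace (ZMod p) Fq (β ^ ((k : ℕ) - 2) * d))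
    (C' : Set ((Fin (e + 2) ⊕ Fq) → ZMod p)) (hC' : C' = genCode (e + 2) G2) :
    -- length `p^e + e + 2`
    Fintype.card (Fin (e + 2) ⊕ Fq) = p ^ e + e + 2 ∧
    -- dimension `e + 2`
    Nat.card C' = p ^ (e + 2) ∧
    -- minimum distance
    (ε * qchar (ZMod p) (-1) ^ (e / 2) = 1 →
      IsMinDist C' (p ^ e - p ^ (e - 1) - (p - 1) * p ^ (e / 2 - 1) + 2)) ∧
    (ε * qchar (ZMod p) (-1) ^ (e / 2) = -1 →
      IsMinDist C' (p ^ e - p ^ (e - 1) - p ^ (e / 2 - 1) + 1)) ∧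
    -- the dual has dimension `p^e` and minimum distance `3`
    Nat.card (dualCode C') = p ^ (p ^ e) ∧
    IsMinDist (dualCode C') 3 := by
  have hp : p.Prime := Fact.out
  subst hC'
  have hcodim : IsMinDist (dualCode (genCode (e + 2) G2)) 3 :=
    aux_dual_min p e Fq hcq f hRF.map_zero β hβ G2 hG2
  have hc1 := aux_card_dual (e + 2) G2
  have hc2 := aux_card_gen (e + 2) G2
  rw [ZMod.card, hcq] at hc1
  rw [ZMod.card] at hc2
  refine ⟨by rw [Fintype.card_sum, Fintype.card_fin, hcq]; omega, hc2, ?_, ?_, hc1, hcodim⟩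
  all_goals
    clear hcodim hc1 hc2
    obtain ⟨n, rfl⟩ : ∃ n, e = 2 * (n + 1) := by
      obtain ⟨k, hk⟩ := heven
      exact ⟨k - 1, by omega⟩
    rw [show 2 * (n + 1) / 2 = n + 1 by omega, show n + 1 - 1 = n by omega,
      show 2 * (n + 1) - 1 = 2 * n + 1 by omega]
    intro hs
  · exact aux_plus p n hodd Fq hcq f ε fstar hRF β hβ G2 hG2 hs
  · exact aux_minus p n hodd Fq hcq f ε fstar hRF β hβ G2 hG2 hs
end
end

section
/- Let q = p² (i.e., e = 2) and let f : F_q → F_p belong to the class RF with sign ε satisfying ε η_0(−1) = −1. Then C_f is a linear code of length p², dimension 4 and minimum distance p² − p − 1 which has locality 3, and C_f^⊥ is a linear code of length p², dimension p² − 4 and minimum distance 4 which has locality p² − p − 2. Moreover, C_f^⊥ attains the Singleton-like bound for locally recoverable codes: its minimum distance equals n − k − ⌈k/r⌉ + 2 with n = p², k = p² − 4 and r = p² − p − 2. -/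
open scoped Classical

noncomputable section

/-- The code `C_f` attached to `f`. -/
def rfCode (p : ℕ) (Fq : Type*) [Field Fq] [Fintype Fq] [Algebra (ZMod p) Fq]
    (f : Fq → ZMod p) : Set (Fq → ZMod p) :=
  {w | ∃ a c : ZMod p, ∃ b : Fq, ∀ x : Fq,
    w x = a * f x + Algebra.trace (ZMod p) Fq (b * x) + c}

/-- The code `C` has locality `r`: every coordinate `i` can be recovered from some
set `R` of `r` other coordinates. -/
def HasLocality {ι F : Type*} [Fintype ι] (C : Set (ι → F)) (r : ℕ) : Prop :=
  ∀ i : ι, ∃ R : Finset ι, R.card = r ∧ i ∉ R ∧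
    ∀ c₁ ∈ C, ∀ c₂ ∈ C, (∀ j ∈ R, c₁ j = c₂ j) → c₁ i = c₂ i


/-- An integer relation among the powers of `ζ_p` has all coefficients equal. -/
lemma rel_const (p : ℕ) [Fact p.Prime] (a : ZMod p → ℤ)
    (h : ∑ t : ZMod p, (a t : ℂ) * zetapc p ^ t.val = 0) (s t : ZMod p) : a s = a t := by
  have hp : p.Prime := Fact.out
  have hprim : IsPrimitiveRoot (zetapc p) p := Complex.isPrimitiveRoot_exp p hp.ne_zero
  have hmin := Polynomial.cyclotomic_eq_minpoly_rat hprim hp.pos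
  let c : ZMod p := ((p - 1 : ℕ) : ZMod p)
  have hcoef : ∀ b : ZMod p → ℚ, ∀ u : ZMod p,
      (∑ t : ZMod p, Polynomial.C (b t) * Polynomial.X ^ t.val).coeff u.val = b u := by
    intro b u
    rw [Polynomial.finsetSum_coeff]
    simp only [Polynomial.coeff_C_mul, Polynomial.coeff_X_pow]
    rw [Finset.sum_eq_single u]
    · simp
    · intro t _ ht
      rw [if_neg, mul_zero]
      intro h
      exact ht (ZMod.val_injective p h.symm)
    · simp
  let Q : Polynomial ℚ :=
    ∑ t : ZMod p, Polynomial.C ((a t : ℚ) - a c) * Polynomial.X ^ t.val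
  have hone : ∑ t : ZMod p, zetapc p ^ t.val = 0 := by
    have h1 := hprim.geom_sum_eq_zero hp.one_lt
    rw [← h1]
    refine Finset.sum_bij (fun t _ => t.val) ?_ ?_ ?_ ?_
    · intro t _; simpa using ZMod.val_lt t
    · intro x _ y _ h; exact ZMod.val_injective p h
    · intro b hb
      exact ⟨(b : ZMod p), Finset.mem_univ _, ZMod.val_cast_of_lt (by simpa using hb)⟩
    · intros; rfl
  have hQ0 : Polynomial.aeval (zetapc p) Q = 0 := by
    simp only [Q, map_sum, map_mul, map_pow, Polynomial.aeval_C, Polynomial.aeval_X]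
    have : ∀ t : ZMod p, (algebraMap ℚ ℂ) ((a t : ℚ) - a c) * zetapc p ^ t.val
        = (a t : ℂ) * zetapc p ^ t.val - (a c : ℂ) * zetapc p ^ t.val := by
      intro t; simp; ring
    rw [Finset.sum_congr rfl (fun t _ => this t), Finset.sum_sub_distrib, ← Finset.mul_sum,
      h, hone]
    simp
  have hdvd := minpoly.dvd ℚ (zetapc p) hQ0
  rw [← hmin] at hdvd
  have hcv : c.val = p - 1 := ZMod.val_cast_of_lt (by have := hp.pos; omega)
  have hdeg : Q.degree < (Polynomial.cyclotomic p ℚ).degree := by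
    rw [Polynomial.degree_cyclotomic, Nat.totient_prime hp, Polynomial.degree_lt_iff_coeff_zero]
    intro m hm
    by_cases hmp : m < p
    · have : m = c.val := by rw [hcv]; omega
      rw [this, hcoef]; simp
    · rw [Polynomial.finsetSum_coeff]
      refine Finset.sum_eq_zero fun t _ => ?_
      rw [Polynomial.coeff_C_mul, Polynomial.coeff_X_pow, if_neg, mul_zero]
      have := ZMod.val_lt t
      omega
  have hQ : Q = 0 := Polynomial.eq_zero_of_dvd_of_degree_lt hdvd hdeg
  have key : ∀ u, a u = a c := by
    intro u
    have := hcoef (fun t => (a t : ℚ) - a c) u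
    change Q.coeff _ = _ at this
    rw [hQ] at this
    simp only [Polynomial.coeff_zero] at this
    have h2 : (a u : ℚ) = a c := by linarith
    exact_mod_cast h2
  rw [key s, key t]

lemma sqrtpstar_sq (p : ℕ) [Fact p.Prime] (hodd : Odd p) :
    sqrtpstar p ^ 2 = ((qchar (ZMod p) (-1) : ℤ) : ℂ) * p := by
  have hp : p.Prime := Fact.out
  have h1 : ((Real.sqrt p : ℝ) : ℂ) ^ 2 = p := by
    rw [← Complex.ofReal_pow, Real.sq_sqrt (by positivity)]; simp
  rw [sqrtpstar, mul_pow, h1]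
  congr 1
  have h2 : Complex.I ^ (((p - 1) / 2) ^ 2) = Complex.I ^ (((p - 1) / 2) ^ 2) := rfl
  rw [← pow_mul, mul_comm, pow_mul, Complex.I_sq]
  have hq : qchar (ZMod p) (-1) = if IsSquare (-1 : ZMod p) then 1 else -1 := by
    simp [qchar]
  rw [hq]
  have h3 := ZMod.exists_sq_eq_neg_one_iff (p := p)
  obtain ⟨k, hk⟩ := hodd
  have h4 : (p - 1) / 2 = k := by omega
  rw [h4]
  by_cases he : Even k
  · rw [if_pos]
    · have : Even (k ^ 2) := he.pow_of_ne_zero (by norm_num)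
      rw [this.neg_one_pow]; simp
    · rw [h3]; obtain ⟨j, hj⟩ := he; omega
  · rw [if_neg]
    · rw [Nat.not_even_iff_odd] at he
      rw [he.pow.neg_one_pow]; simp
    · rw [h3]
      rw [Nat.not_even_iff_odd] at he
      obtain ⟨j, hj⟩ := he; omega

/-- Value distribution of `f(x) - Tr(βx)`. -/
lemma value_dist (p : ℕ) [Fact p.Prime] (hodd : Odd p)
    (Fq : Type) [Field Fq] [Fintype Fq] [Algebra (ZMod p) Fq]
    (hcq : Fintype.card Fq = p ^ 2)
    (f : Fq → ZMod p) (ε : ℤ) (fstar : Fq → ZMod p) (hRF : IsRF p 2 Fq f ε fstar)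
    (hsign : ε * qchar (ZMod p) (-1) = -1) (β : Fq) :
    ∃ s : ZMod p, ∀ t : ZMod p,
      (Finset.univ.filter fun x : Fq => f x + Algebra.trace (ZMod p) Fq (β * x) = t).card
        = if t = s then 1 else p + 1 := by
  have hp : p.Prime := Fact.out
  have hw := hRF.walsh (-β)
  have hW : (∑ x : Fq, zetapc p ^ (f x + Algebra.trace (ZMod p) Fq (β * x)).val)
      = -(p : ℂ) * zetapc p ^ (fstar (-β)).val := by
    rw [sqrtpstar_sq p hodd] at hw
    have h1 : (ε : ℂ) * ((qchar (ZMod p) (-1) : ℤ) : ℂ) = -1 := by exact_mod_cast hsign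
    rw [← mul_assoc, h1] at hw
    simpa using hw
  let s := fstar (-β)
  let g : Fq → ZMod p := fun x => f x + Algebra.trace (ZMod p) Fq (β * x)
  let N : ZMod p → ℕ := fun t => (Finset.univ.filter fun x : Fq => g x = t).card
  have hsum : ∑ x : Fq, zetapc p ^ (g x).val = ∑ t : ZMod p, (N t : ℂ) * zetapc p ^ t.val := by
    rw [← Finset.sum_fiberwise Finset.univ g]
    refine Finset.sum_congr rfl fun t _ => ?_
    rw [Finset.sum_congr rfl (g := fun _ => zetapc p ^ t.val), Finset.sum_const, nsmul_eq_mul]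
    intro x hx
    rw [(Finset.mem_filter.mp hx).2]
  have hNs : ∑ t, N t = p ^ 2 := by
    rw [← hcq, ← Finset.card_univ]
    exact (Finset.card_eq_sum_card_fiberwise (fun x _ => Finset.mem_univ (g x))).symm
  let a : ZMod p → ℤ := fun t => (N t : ℤ) + if t = s then (p : ℤ) else 0
  have ha : ∑ t : ZMod p, (a t : ℂ) * zetapc p ^ t.val = 0 := by
    have : ∀ t, (a t : ℂ) * zetapc p ^ t.val = (N t : ℂ) * zetapc p ^ t.val
        + if t = s then (p : ℂ) * zetapc p ^ s.val else 0 := by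
      intro t
      simp only [a]
      split_ifs with h
      · subst h; push_cast; ring
      · push_cast; ring
    rw [Finset.sum_congr rfl (fun t _ => this t), Finset.sum_add_distrib, ← hsum]
    simp only [Finset.sum_ite_eq', Finset.mem_univ, if_true]
    change (∑ x : Fq, zetapc p ^ (f x + Algebra.trace (ZMod p) Fq (β * x)).val) + _ = 0
    rw [hW]; ring
  have hc := rel_const p a ha
  have htot : ∑ t, a t = (p : ℤ) ^ 2 + p := by
    simp only [a, Finset.sum_add_distrib, Finset.sum_ite_eq', Finset.mem_univ, if_true]
    congr 1
    exact_mod_cast hNs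
  have has : ∀ t, a t = p + 1 := by
    intro t
    rw [Finset.sum_congr rfl (fun u _ => hc u t), Finset.sum_const, Finset.card_univ,
      ZMod.card, nsmul_eq_mul] at htot
    have hp0 : (p : ℤ) ≠ 0 := by exact_mod_cast hp.ne_zero
    apply mul_left_cancel₀ hp0
    rw [htot]; ring
  refine ⟨s, fun t => ?_⟩
  have h := has t
  simp only [a] at h
  change N t = _
  split_ifs at h ⊢ <;> omega

set_option linter.unusedSectionVars false

section Core
variable {p : ℕ} [Fact p.Prime] {Fq : Type} [Field Fq] [Fintype Fq] [Algebra (ZMod p) Fq]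

lemma tr_surj {d : Fq} (hd : d ≠ 0) (t : ZMod p) :
    ∃ b : Fq, Algebra.trace (ZMod p) Fq (b * d) = t := by
  obtain ⟨y, hy⟩ := Algebra.trace_surjective (ZMod p) Fq t
  exact ⟨y / d, by rw [div_mul_cancel₀ _ hd, hy]⟩

lemma tr_fiber (hcq : Fintype.card Fq = p ^ 2) {b : Fq} (hb : b ≠ 0) (t : ZMod p) :
    (Finset.univ.filter fun x : Fq => Algebra.trace (ZMod p) Fq (b * x) = t).card = p := by
  have hp : p.Prime := Fact.out
  let φ : Fq →+ ZMod p :=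
    (Algebra.trace (ZMod p) Fq).toAddMonoidHom.comp (AddMonoidHom.mulLeft b)
  have hφ : ∀ x, φ x = Algebra.trace (ZMod p) Fq (b * x) := fun x => rfl
  have hs : ∀ s, s ∈ Set.range φ := by
    intro s
    obtain ⟨y, hy⟩ := tr_surj hb s
    exact ⟨y, by rw [hφ, mul_comm, hy]⟩
  have heq : ∀ s, (Finset.univ.filter fun x : Fq => φ x = s).card
      = (Finset.univ.filter fun x : Fq => φ x = t).card := fun s =>
    AddMonoidHom.card_fiber_eq_of_mem_range φ (hs s) (hs t)
  have htot : ∑ s : ZMod p, (Finset.univ.filter fun x : Fq => φ x = s).card = p ^ 2 := by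
    rw [← hcq, ← Finset.card_univ]
    exact (Finset.card_eq_sum_card_fiberwise (fun x _ => Finset.mem_univ (φ x))).symm
  rw [Finset.sum_congr rfl (fun s _ => heq s), Finset.sum_const, Finset.card_univ, ZMod.card,
    smul_eq_mul, pow_two] at htot
  exact Nat.eq_of_mul_eq_mul_left hp.pos htot

lemma tr_ker (hcq : Fintype.card Fq = p ^ 2) {d : Fq} (hd : d ≠ 0) :
    ∃ b : Fq, b ≠ 0 ∧ Algebra.trace (ZMod p) Fq (b * d) = 0 := by
  have hp : p.Prime := Fact.out
  have h := tr_fiber hcq hd 0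
  obtain ⟨b, hb, hb0⟩ := Finset.exists_mem_ne (h ▸ hp.one_lt) 0
  exact ⟨b, hb0, by rw [mul_comm]; exact (Finset.mem_filter.mp hb).2⟩

/-- The codeword with parameters `a, b, c`. -/
def cw (f : Fq → ZMod p) (a : ZMod p) (b : Fq) (c : ZMod p) : Fq → ZMod p :=
  fun x => a * f x + Algebra.trace (ZMod p) Fq (b * x) + c

lemma cw_mem (f : Fq → ZMod p) (a : ZMod p) (b : Fq) (c : ZMod p) :
    cw f a b c ∈ rfCode p Fq f := ⟨a, c, b, fun _ => rfl⟩

lemma mem_iff (f : Fq → ZMod p) (w : Fq → ZMod p) :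
    w ∈ rfCode p Fq f ↔ ∃ a b c, w = cw f a b c := by
  constructor
  · rintro ⟨a, c, b, h⟩; exact ⟨a, b, c, funext h⟩
  · rintro ⟨a, b, c, rfl⟩; exact cw_mem f a b c

/-- number of zeros -/
def nz (w : Fq → ZMod p) : ℕ := (Finset.univ.filter fun x : Fq => w x = 0).card

lemma nz_add (hcq : Fintype.card Fq = p ^ 2) (w : Fq → ZMod p) :
    nz w + hammingNorm w = p ^ 2 := by
  rw [← hcq, ← Finset.card_univ, nz, hammingNorm]
  rw [← Finset.card_filter_add_card_filter_not (s := Finset.univ) (fun x : Fq => w x = 0)]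

/-- The hypothesis extracted from the Walsh transform. -/
def VDist (f : Fq → ZMod p) : Prop := ∀ β : Fq, ∃ s : ZMod p, ∀ t : ZMod p,
  (Finset.univ.filter fun x : Fq => f x + Algebra.trace (ZMod p) Fq (β * x) = t).card
        = if t = s then 1 else p + 1

variable {f : Fq → ZMod p}

lemma nz_one (hf : VDist f) (b : Fq) :
    ∃ s : ZMod p, ∀ c, nz (cw f 1 b c) = if c = s then 1 else p + 1 := by
  obtain ⟨s, hs⟩ := hf b
  refine ⟨-s, fun c => ?_⟩
  have := hs (-c)
  simp only [neg_eq_iff_eq_neg] at this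
  rw [← this, nz]
  congr 1
  ext x
  simp only [cw, one_mul, Finset.mem_filter, Finset.mem_univ, true_and]
  exact add_eq_zero_iff_eq_neg

lemma cw_smul (f : Fq → ZMod p) (k a : ZMod p) (b : Fq) (c : ZMod p) :
    k • cw f a b c = cw f (k * a) (k • b) (k * c) := by
  ext x
  simp only [cw, Pi.smul_apply, smul_eq_mul, smul_mul_assoc, map_smul]
  ring

lemma cw_sub (f : Fq → ZMod p) (a a' : ZMod p) (b b' : Fq) (c c' : ZMod p) :
    cw f a b c - cw f a' b' c' = cw f (a - a') (b - b') (c - c') := by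
  ext x
  simp only [cw, Pi.sub_apply, sub_mul, map_sub]
  ring

lemma cw_add (f : Fq → ZMod p) (a a' : ZMod p) (b b' : Fq) (c c' : ZMod p) :
    cw f a b c + cw f a' b' c' = cw f (a + a') (b + b') (c + c') := by
  ext x
  simp only [cw, Pi.add_apply, add_mul, map_add]
  ring

lemma nz_le (hcq : Fintype.card Fq = p ^ 2) (hf : VDist f) (a : ZMod p) (b : Fq) (c : ZMod p)
    (h : ¬ (a = 0 ∧ b = 0 ∧ c = 0)) : nz (cw f a b c) ≤ p + 1 := by
  by_cases ha : a = 0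
  · by_cases hb : b = 0
    · have hc : c ≠ 0 := fun hc => h ⟨ha, hb, hc⟩
      simp [nz, cw, ha, hb, hc]
    · have := tr_fiber hcq hb (-c)
      rw [nz]
      have h2 : (Finset.univ.filter fun x : Fq => cw f a b c x = 0)
          = Finset.univ.filter fun x : Fq => Algebra.trace (ZMod p) Fq (b * x) = -c := by
        ext x
        simp only [cw, ha, zero_mul, zero_add, Finset.mem_filter, Finset.mem_univ, true_and]
        exact add_eq_zero_iff_eq_neg
      rw [h2, this]; omega
  · obtain ⟨s, hs⟩ := nz_one hf (a⁻¹ • b)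
    have h1 : nz (cw f a b c) = nz (cw f 1 (a⁻¹ • b) (a⁻¹ * c)) := by
      have h2 := cw_smul f a⁻¹ a b c
      rw [inv_mul_cancel₀ ha] at h2
      rw [← h2, nz, nz]
      congr 1
      ext x
      simp [ha]
    rw [h1, hs]
    split_ifs <;> omega

lemma cw_ne_zero (hodd : Odd p) (hcq : Fintype.card Fq = p ^ 2) (hf : VDist f)
    (a : ZMod p) (b : Fq) (c : ZMod p)
    (h : ¬ (a = 0 ∧ b = 0 ∧ c = 0)) : cw f a b c ≠ 0 := by
  intro h0
  have h1 := nz_le hcq hf a b c h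
  have h2 : nz (cw f a b c) = p ^ 2 := by
    rw [h0, ← hcq, ← Finset.card_univ]; simp [nz]
  have hp : p.Prime := Fact.out
  have := hp.two_le
  nlinarith

/-- No three points are collinear. -/
lemma dual_weight (hodd : Odd p) (hcq : Fintype.card Fq = p ^ 2) (hf : VDist f)
    (u : Fq → ZMod p) (hu : u ∈ dualCode (rfCode p Fq f)) (hu0 : u ≠ 0) :
    4 ≤ hammingNorm u := by
  have hp : p.Prime := Fact.out
  by_contra hlt
  have h3 : hammingNorm u ≤ 3 := by omega
  have hp3 : 3 ≤ p := by
    have := hp.two_le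
    obtain ⟨k, hk⟩ := hodd
    omega
  obtain ⟨T, hT1, -, hT3⟩ := Finset.exists_subsuperset_card_eq
    (Finset.subset_univ (Finset.univ.filter fun x : Fq => u x ≠ 0)) h3
    (by rw [Finset.card_univ, hcq]; nlinarith)
  obtain ⟨x3, hx3⟩ := Function.ne_iff.mp hu0
  simp only [Pi.zero_apply] at hx3
  have hx3T : x3 ∈ T := hT1 (by simpa using hx3)
  have hE : (T.erase x3).card = 2 := by rw [Finset.card_erase_of_mem hx3T, hT3]
  obtain ⟨x1, x2, h12, hE2⟩ := Finset.card_eq_two.mp hE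
  have h13 : x1 ≠ x3 := Finset.ne_of_mem_erase (s := T) (by rw [hE2]; simp)
  have h23 : x2 ≠ x3 := Finset.ne_of_mem_erase (s := T) (by rw [hE2]; simp)
  have hTeq : T = {x3, x1, x2} := by rw [← Finset.insert_erase hx3T, hE2]
  have hvan : ∀ w ∈ rfCode p Fq f, w x1 = 0 → w x2 = 0 → w x3 = 0 := by
    intro w hw hw1 hw2
    have h := hu w hw
    rw [Finset.sum_eq_single x3] at h
    · exact (mul_eq_zero.mp h).resolve_left hx3
    · intro x _ hx
      by_cases hux : u x = 0
      · rw [hux, zero_mul]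
      · have : x ∈ T := hT1 (by simpa using hux)
        rw [hTeq] at this
        simp only [Finset.mem_insert, Finset.mem_singleton] at this
        rcases this with h | h | h
        · exact absurd h hx
        · rw [h, hw1, mul_zero]
        · rw [h, hw2, mul_zero]
    · simp
  have hd : x2 - x1 ≠ 0 := sub_ne_zero.mpr h12.symm
  obtain ⟨b0, hb0⟩ := tr_surj (p := p) hd (f x1 - f x2)
  obtain ⟨b, hb, hbt⟩ := tr_ker hcq hd
  rw [mul_sub, map_sub] at hb0 hbt
  let tr := Algebra.trace (ZMod p) Fq
  let g := cw f 1 b0 (-(f x1 + tr (b0 * x1)))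
  let l := cw f 0 b (-(tr (b * x1)))
  have g1 : g x1 = 0 := by simp [g, cw, tr]
  have g2 : g x2 = 0 := by simp only [g, cw, tr]; linear_combination hb0
  have l1 : l x1 = 0 := by simp [l, cw, tr]
  have l2 : l x2 = 0 := by simp only [l, cw, tr]; linear_combination hbt
  have g3 : g x3 = 0 := hvan g (cw_mem _ _ _ _) g1 g2
  have l3 : l x3 = 0 := hvan l (cw_mem _ _ _ _) l1 l2
  -- double counting
  have hle : ∀ k : ZMod p, (Finset.univ.filter fun x : Fq => g x + k * l x = 0).card ≤ p + 1 := by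
    intro k
    have h : g + k • l = cw f 1 (b0 + k • b) (-(f x1 + tr (b0 * x1)) + k * (-(tr (b * x1)))) := by
      simp only [g, l]
      rw [cw_smul, cw_add]; simp
    have h2 := nz_le hcq hf 1 (b0 + k • b) (-(f x1 + tr (b0 * x1)) + k * (-(tr (b * x1))))
      (by simp)
    rw [← h] at h2
    exact h2
  have hsum : ∑ k : ZMod p, (Finset.univ.filter fun x : Fq => g x + k * l x = 0).card
      = ∑ x : Fq, (Finset.univ.filter fun k : ZMod p => g x + k * l x = 0).card := by
    simp only [Finset.card_filter]
    exact Finset.sum_comm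
  have hupper : ∑ k : ZMod p, (Finset.univ.filter fun x : Fq => g x + k * l x = 0).card
      ≤ p * (p + 1) := by
    refine (Finset.sum_le_sum fun k _ => hle k).trans ?_
    simp
  have hlow : ∀ x : Fq, ((if l x ≠ 0 then 1 else 0) + if x ∈ ({x3, x1, x2} : Finset Fq) then p else 0)
      ≤ (Finset.univ.filter fun k : ZMod p => g x + k * l x = 0).card := by
    intro x
    by_cases hx : x ∈ ({x3, x1, x2} : Finset Fq)
    · have hgl : g x = 0 ∧ l x = 0 := by
        simp only [Finset.mem_insert, Finset.mem_singleton] at hx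
        rcases hx with h | h | h <;> rw [h] <;> constructor <;> assumption
      simp [hgl.1, hgl.2]
      split_ifs <;> simp
    · rw [if_neg hx]
      split_ifs with h
      · rw [add_zero, Nat.one_le_iff_ne_zero, ← Nat.pos_iff_ne_zero, Finset.card_pos]
        refine ⟨-(g x) / l x, ?_⟩
        simp only [Finset.mem_filter, Finset.mem_univ, true_and]
        field_simp
        ring
      · omega
  have hlower := Finset.sum_le_sum fun x (_ : x ∈ (Finset.univ : Finset Fq)) => hlow x
  rw [Finset.sum_add_distrib, ← Finset.card_filter, ← hsum] at hlower
  have hl : (Finset.univ.filter fun x : Fq => l x ≠ 0).card + p = p ^ 2 := by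
    have h1 := nz_add hcq l
    have h2 : nz l = p := by
      refine Eq.trans ?_ (tr_fiber hcq hb (tr (b * x1)))
      rw [nz]
      congr 1
      ext x
      simp only [l, cw, zero_mul, zero_add, Finset.mem_filter, Finset.mem_univ, true_and]
      rw [← sub_eq_add_neg, sub_eq_zero]
    rw [h2, hammingNorm] at h1
    omega
  have h3p : ∑ x : Fq, (if x ∈ ({x3, x1, x2} : Finset Fq) then p else 0) = 3 * p := by
    rw [← Finset.sum_filter]
    simp only [Finset.filter_mem_eq_inter, Finset.univ_inter, Finset.sum_const, smul_eq_mul]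
    rw [← hTeq, hT3]
  rw [h3p] at hlower
  nlinarith

/-- Through each point there is a plane with at least four points, hence a dual word. -/
lemma dual_word (hodd : Odd p) (hcq : Fintype.card Fq = p ^ 2) (hf : VDist f) (x0 : Fq) :
    ∃ u ∈ dualCode (rfCode p Fq f), u x0 ≠ 0 ∧ hammingNorm u = 4 := by
  have hp : p.Prime := Fact.out
  have hp3 : 3 ≤ p := by
    have := hp.two_le
    obtain ⟨k, hk⟩ := hodd
    omega
  let x1 := x0 + 1
  have hd : x1 - x0 ≠ 0 := by simp [x1]
  obtain ⟨b0, hb0⟩ := tr_surj (p := p) hd (f x0 - f x1)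
  rw [mul_sub, map_sub] at hb0
  let tr := Algebra.trace (ZMod p) Fq
  let c0 := -(f x0 + tr (b0 * x0))
  let g := cw f 1 b0 c0
  have g0 : g x0 = 0 := by simp [g, cw, tr, c0]
  have g1 : g x1 = 0 := by simp only [g, cw, tr, c0]; linear_combination hb0
  let Z := Finset.univ.filter fun x : Fq => g x = 0
  have hZ : Z.card = p + 1 := by
    obtain ⟨s, hs⟩ := nz_one hf b0
    have h1 : Z.card = _ := hs c0
    rw [h1]
    split_ifs with h
    · rw [if_pos h] at h1
      have h2 : ({x0, x1} : Finset Fq) ⊆ Z := by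
        intro x hx
        simp only [Finset.mem_insert, Finset.mem_singleton] at hx
        rcases hx with rfl | rfl <;> simp [Z, g0, g1]
      have h3 := Finset.card_le_card h2
      rw [Finset.card_pair (by simp [x1])] at h3
      omega
    · rfl
  obtain ⟨T, hT0, hTZ, hT4⟩ := Finset.exists_subsuperset_card_eq (s := {x0}) (t := Z) (n := 4)
    (by simp [Z, g0]) (by simp) (by omega)
  have hfr : Module.finrank (ZMod p) Fq = 2 := by
    have h := Module.card_eq_pow_finrank (K := ZMod p) (V := Fq)
    rw [hcq, ZMod.card] at h
    exact (Nat.pow_right_injective hp.two_le h).symm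
  have hnli : ¬ LinearIndependent (ZMod p) (fun x : T => ((1 : ZMod p), (x : Fq))) := by
    intro hli
    have := hli.fintype_card_le_finrank
    rw [Module.finrank_prod, hfr, Module.finrank_self, Fintype.card_coe, hT4] at this
    omega
  obtain ⟨v, hv, i, hi⟩ := Fintype.not_linearIndependent_iff.mp hnli
  let u : Fq → ZMod p := fun x => if h : x ∈ T then v ⟨x, h⟩ else 0
  have huT : ∀ w : Fq → ZMod p, ∑ x, u x * w x = ∑ x : T, v x * w x := by
    intro w
    rw [← Finset.sum_subset (Finset.subset_univ T), ← Finset.sum_coe_sort T]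
    · refine Finset.sum_congr rfl fun x _ => ?_
      simp [u]
    · intro x _ hx; simp [u, hx]
  have hv1 : ∑ x : T, v x = 0 := by
    have := congrArg Prod.fst hv
    simpa [Prod.fst_sum] using this
  have hv2 : ∑ x : T, v x • (x : Fq) = 0 := by
    have := congrArg Prod.snd hv
    simpa [Prod.snd_sum] using this
  have hvt : ∀ b : Fq, ∑ x : T, v x * tr (b * x) = 0 := by
    intro b
    have : tr (b * ∑ x : T, v x • (x : Fq)) = 0 := by rw [hv2]; simp
    rw [Finset.mul_sum, map_sum] at this
    rw [← this]
    refine Finset.sum_congr rfl fun x _ => ?_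
    rw [mul_smul_comm, map_smul, smul_eq_mul]
  have hvf : ∑ x : T, v x * f x = 0 := by
    have h : ∀ x : T, v x * f x = - (v x * tr (b0 * x)) - v x * c0 := by
      intro x
      have hx : g x = 0 := (Finset.mem_filter.mp (hTZ x.2)).2
      simp only [g, cw, one_mul] at hx
      change f x + tr (b0 * x) + c0 = 0 at hx
      linear_combination v x * hx
    rw [Finset.sum_congr rfl (fun x _ => h x), Finset.sum_sub_distrib, Finset.sum_neg_distrib,
      hvt, ← Finset.sum_mul, hv1]
    simp
  have hu : u ∈ dualCode (rfCode p Fq f) := by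
    intro w hw
    obtain ⟨a, b, c, rfl⟩ := (mem_iff f w).mp hw
    rw [huT]
    have h : ∀ x : T, v x * cw f a b c x = a * (v x * f x) + v x * tr (b * x) + v x * c := by
      intro x; simp only [cw, tr]; ring
    rw [Finset.sum_congr rfl (fun x _ => h x), Finset.sum_add_distrib, Finset.sum_add_distrib,
      hvt, ← Finset.sum_mul, hv1, ← Finset.mul_sum, hvf]
    simp
  have hu0 : u ≠ 0 := by
    intro h
    apply hi
    have := congrFun h i
    simpa [u] using this
  have h4 := dual_weight hodd hcq hf u hu hu0
  have hsub : (Finset.univ.filter fun x : Fq => u x ≠ 0) ⊆ T := by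
    intro x hx
    by_contra hxT
    simp [u, hxT] at hx
  have hle := Finset.card_le_card hsub
  have hn : hammingNorm u = (Finset.univ.filter fun x : Fq => u x ≠ 0).card := rfl
  refine ⟨u, hu, ?_, by omega⟩
  have heq := Finset.eq_of_subset_of_card_le hsub (by omega)
  have hx0 : x0 ∈ T := hT0 (by simp)
  rw [← heq] at hx0
  exact (Finset.mem_filter.mp hx0).2

/-- For each point there is a minimum weight codeword not vanishing there. -/
lemma code_word (hodd : Odd p) (hcq : Fintype.card Fq = p ^ 2) (hf : VDist f) (x0 : Fq) :
    ∃ w ∈ rfCode p Fq f, w x0 ≠ 0 ∧ hammingNorm w = p ^ 2 - p - 1 := by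
  have hp : p.Prime := Fact.out
  have hp3 : 3 ≤ p := by
    have := hp.two_le
    obtain ⟨k, hk⟩ := hodd
    omega
  obtain ⟨s, hs⟩ := nz_one hf (0 : Fq)
  obtain ⟨c, hc⟩ : ∃ c : ZMod p, c ∉ ({s, -f x0} : Finset (ZMod p)) := by
    by_contra h
    push Not at h
    have h1 := Finset.card_le_card (fun x _ => h x : (Finset.univ : Finset (ZMod p)) ⊆ _)
    rw [Finset.card_univ, ZMod.card] at h1
    have := Finset.card_le_two (a := s) (b := -f x0)
    omega
  simp only [Finset.mem_insert, Finset.mem_singleton, not_or] at hc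
  refine ⟨cw f 1 0 c, cw_mem _ _ _ _, ?_, ?_⟩
  · simp only [cw, one_mul, zero_mul, map_zero, add_zero]
    intro h
    exact hc.2 (by linear_combination h)
  · have h1 := hs c
    rw [if_neg hc.1] at h1
    have h2 := nz_add hcq (cw f 1 0 c)
    omega

lemma locality_of {C D : Set (Fq → ZMod p)} {r : ℕ}
    (hsub : ∀ a ∈ C, ∀ b ∈ C, a - b ∈ C)
    (hort : ∀ w ∈ C, ∀ u ∈ D, ∑ x, u x * w x = 0)
    (h : ∀ x0, ∃ u ∈ D, u x0 ≠ 0 ∧ hammingNorm u = r + 1) : HasLocality C r := by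
  intro i
  obtain ⟨u, hu, hui, hn⟩ := h i
  refine ⟨(Finset.univ.filter fun x : Fq => u x ≠ 0).erase i, ?_, by simp, ?_⟩
  · rw [Finset.card_erase_of_mem (by simpa using hui)]
    change hammingNorm u - 1 = r
    omega
  · intro c1 h1 c2 h2 heq
    have := hort _ (hsub c1 h1 c2 h2) u hu
    rw [Finset.sum_eq_single i] at this
    · have := (mul_eq_zero.mp this).resolve_left hui
      exact sub_eq_zero.mp this
    · intro x _ hx
      by_cases hux : u x = 0
      · rw [hux, zero_mul]
      · rw [Pi.sub_apply, heq x (by simp [hx, hux]), sub_self, mul_zero]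
    · simp

/-- The parametrization of the code as a linear map. -/
def cwLin (f : Fq → ZMod p) : (ZMod p × Fq × ZMod p) →ₗ[ZMod p] (Fq → ZMod p) where
  toFun v := cw f v.1 v.2.1 v.2.2
  map_add' v w := by rw [cw_add]; rfl
  map_smul' k v := by rw [RingHom.id_apply, cw_smul]; rfl

lemma cwLin_inj (hodd : Odd p) (hcq : Fintype.card Fq = p ^ 2) (hf : VDist f) :
    Function.Injective (cwLin f) := by
  rw [← LinearMap.ker_eq_bot, LinearMap.ker_eq_bot']
  rintro ⟨a, b, c⟩ h
  by_contra hne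
  refine cw_ne_zero hodd hcq hf a b c ?_ h
  rintro ⟨rfl, rfl, rfl⟩
  exact hne rfl

lemma range_cwLin (f : Fq → ZMod p) : (LinearMap.range (cwLin f) : Set _) = rfCode p Fq f := by
  ext w
  rw [mem_iff]
  constructor
  · rintro ⟨⟨a, b, c⟩, rfl⟩; exact ⟨a, b, c, rfl⟩
  · rintro ⟨a, b, c, rfl⟩; exact ⟨(a, b, c), rfl⟩

lemma code_card (hodd : Odd p) (hcq : Fintype.card Fq = p ^ 2) (hf : VDist f) :
    Nat.card (rfCode p Fq f) = p ^ 4 := by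
  rw [← range_cwLin]
  have := Nat.card_range_of_injective (cwLin_inj hodd hcq hf)
  rw [LinearMap.coe_range, this]
  simp [Nat.card_prod, hcq]
  ring

lemma dual_card (hodd : Odd p) (hcq : Fintype.card Fq = p ^ 2) (hf : VDist f) :
    Nat.card (dualCode (rfCode p Fq f)) = p ^ (p ^ 2 - 4) := by
  have hp : p.Prime := Fact.out
  let B : LinearMap.BilinForm (ZMod p) (Fq → ZMod p) := Matrix.toBilin' 1
  have hB : B.Nondegenerate := LinearMap.BilinForm.nondegenerate_toBilin'_of_det_ne_zero' 1 (by simp)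
  have hfin := LinearMap.BilinForm.finrank_orthogonal hB (LinearMap.range (cwLin f))
  have hset : (B.orthogonal (LinearMap.range (cwLin f)) : Set (Fq → ZMod p))
      = dualCode (rfCode p Fq f) := by
    ext u
    rw [← range_cwLin]
    simp only [SetLike.mem_coe, LinearMap.BilinForm.mem_orthogonal_iff, dualCode, Set.mem_ofPred_eq]
    refine forall₂_congr fun v _ => ?_
    simp only [B, Matrix.toBilin'_apply', Matrix.one_mulVec,
      dotProduct]
    simp only [mul_comm]
  have h4 : Module.finrank (ZMod p) (LinearMap.range (cwLin f)) = 4 := by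
    have h := code_card hodd hcq hf
    rw [← range_cwLin] at h
    have h2 := Module.natCard_eq_pow_finrank (K := ZMod p) (V := LinearMap.range (cwLin f))
    rw [Nat.card_zmod] at h2
    exact Nat.pow_right_injective hp.two_le (h2.symm.trans h)
  rw [h4, Module.finrank_fintype_fun_eq_card, hcq] at hfin
  rw [← hset]
  have h2 := Module.natCard_eq_pow_finrank (K := ZMod p)
    (V := B.orthogonal (LinearMap.range (cwLin f)))
  rw [Nat.card_zmod, hfin] at h2
  exact h2

lemma isMinDist_of {C : Set (Fq → ZMod p)} {d : ℕ}
    (h1 : ∃ c ∈ C, c ≠ 0 ∧ hammingNorm c = d) (h2 : ∀ c ∈ C, c ≠ 0 → d ≤ hammingNorm c) :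
    IsMinDist C d := by
  constructor
  · convert h1
  · convert h2

end Core

theorem stmt19 (p : ℕ) [Fact p.Prime] (hodd : Odd p)
    (Fq : Type) [Field Fq] [Fintype Fq] [Algebra (ZMod p) Fq]
    (hcq : Fintype.card Fq = p ^ 2)
    (f : Fq → ZMod p) (ε : ℤ) (fstar : Fq → ZMod p) (hRF : IsRF p 2 Fq f ε fstar)
    (hsign : ε * qchar (ZMod p) (-1) = -1)
    (C : Set (Fq → ZMod p)) (hC : C = rfCode p Fq f) :
    -- `C` is a `[p², 4, p² - p - 1]` code with locality `3`
    Fintype.card Fq = p ^ 2 ∧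
    Nat.card C = p ^ 4 ∧
    IsMinDist C (p ^ 2 - p - 1) ∧
    HasLocality C 3 ∧
    -- the dual is a `[p², p² - 4, 4]` code with locality `p² - p - 2`
    Nat.card (dualCode C) = p ^ (p ^ 2 - 4) ∧
    IsMinDist (dualCode C) 4 ∧
    HasLocality (dualCode C) (p ^ 2 - p - 2) ∧
    -- the dual attains the Singleton-like bound for LRCs:
    -- `d = n - k - ⌈k/r⌉ + 2` with `n = p²`, `k = p² - 4`, `r = p² - p - 2`
    4 = p ^ 2 - (p ^ 2 - 4) - (p ^ 2 - 4) ⌈/⌉ (p ^ 2 - p - 2) + 2 := by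
  subst hC
  have hp : p.Prime := Fact.out
  have hp3 : 3 ≤ p := by
    have := hp.two_le
    obtain ⟨k, hk⟩ := hodd
    omega
  have hf : VDist f := fun β => value_dist p hodd Fq hcq f ε fstar hRF hsign β
  have hpp : p + 6 ≤ p ^ 2 := by nlinarith
  refine ⟨hcq, code_card hodd hcq hf, isMinDist_of ?_ ?_, ?_, dual_card hodd hcq hf, isMinDist_of ?_ ?_, ?_, ?_⟩
  · obtain ⟨w, hw, hw0, hn⟩ := code_word hodd hcq hf (0 : Fq)
    exact ⟨w, hw, fun h => hw0 (by rw [h]; rfl), hn⟩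
  · intro w hw hw0
    obtain ⟨a, b, c, rfl⟩ := (mem_iff f w).mp hw
    have h1 := nz_le hcq hf a b c (by
      rintro ⟨rfl, rfl, rfl⟩
      apply hw0
      ext x
      simp [cw])
    have h2 := nz_add hcq (cw f a b c)
    omega
  · refine locality_of (D := dualCode (rfCode p Fq f)) ?_ (fun w hw u hu => hu w hw)
      (dual_word hodd hcq hf)
    intro a ha b hb
    rw [← range_cwLin] at ha hb ⊢
    exact Submodule.sub_mem _ ha hb
  · obtain ⟨u, hu, hu0, hn⟩ := dual_word hodd hcq hf (0 : Fq)
    exact ⟨u, hu, fun h => hu0 (by rw [h]; rfl), hn⟩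
  · exact fun u hu hu0 => dual_weight hodd hcq hf u hu hu0
  · refine locality_of (D := rfCode p Fq f) ?_ ?_ ?_
    · intro a ha b hb v hv
      simp only [Pi.sub_apply, sub_mul, Finset.sum_sub_distrib]
      rw [ha v hv, hb v hv, sub_zero]
    · intro w hw u hu
      rw [← hw u hu]
      exact Finset.sum_congr rfl fun x _ => mul_comm _ _
    · intro x0
      obtain ⟨w, hw, hw0, hn⟩ := code_word hodd hcq hf x0
      exact ⟨w, hw, hw0, by omega⟩
  · have h : (p ^ 2 - 4) ⌈/⌉ (p ^ 2 - p - 2) = 2 := by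
      apply le_antisymm
      · rw [ceilDiv_le_iff_le_mul (by omega)]
        have : 2 * p ≤ p ^ 2 := by nlinarith
        have : 3 * p ≤ p ^ 2 := by nlinarith
        omega
      · by_contra hlt
        have h1 : (p ^ 2 - 4) ⌈/⌉ (p ^ 2 - p - 2) ≤ 1 := by omega
        rw [ceilDiv_le_iff_le_mul (by omega)] at h1
        omega
    rw [h]
    omega
end
end
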